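/- Let N be a stepwise tree automaton with state set Q over the alphabet Σ, and let h be the forest-algebra homomorphism from the free forest algebra over Σ to the transition algebra of N determined by h(a_□) = {SIG(λ) | λ is a run of N on the atomic context a_□} for every a ∈ Σ. Then for every forest or context D over Σ, h(D) = {SIG(λ) | λ is a run of N on D}. -/

import Mathlib

/-! ### Forests, trees and contexts over an alphabet `σ`.

A forest is an ordered list of labeled unranked trees; a context is a
forest with a single hole at a leaf position. -/

mutual
/-- A `σ`-labeled rooted ordered unranked tree. -/
inductive FTree (σ : Type) : Type
  | node : σ → FForest σ → FTree σ

/-- A `σ`-labeled forest: an ordered (possibly empty) list of trees. -/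
inductive FForest (σ : Type) : Type
  | nil : FForest σ
  | cons : FTree σ → FForest σ → FForest σ
end

/-- Horizontal concatenation of forests (`⊕` on two forests). -/
def FForest.append {σ : Type} : FForest σ → FForest σ → FForest σ
  | .nil, G => G
  | .cons t F, G => .cons t (F.append G)

/-- A `σ`-labeled context: a forest with exactly one hole `□` at a leaf position.
`hole L R` is the context `L ⊕ □ ⊕ R`; `node L a C R` is the context
`L ⊕ a⟨C⟩ ⊕ R` where `a⟨C⟩` is the tree with `a`-labeled root whose
children form the context `C`. -/
inductive FCtx (σ : Type) : Type
  | hole : FForest σ → FForest σ → FCtx σ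
  | node : FForest σ → σ → FCtx σ → FForest σ → FCtx σ

/-- `F ⊕ C` for a forest `F` and a context `C` (the monoidal action ⊕_HV). -/
def FCtx.hvOp {σ : Type} (F : FForest σ) : FCtx σ → FCtx σ
  | .hole L R => .hole (F.append L) R
  | .node L a C R => .node (F.append L) a C R

/-- `C ⊕ F` for a context `C` and a forest `F` (the monoidal action ⊕_VH). -/
def FCtx.vhOp {σ : Type} : FCtx σ → FForest σ → FCtx σ
  | .hole L R, G => .hole L (R.append G)
  | .node L a C R, G => .node L a C (R.append G)

/-- `C ⊙ D` for contexts `C, D`: replace the hole of `C` by `D` (⊙_VV). -/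
def FCtx.vvOp {σ : Type} : FCtx σ → FCtx σ → FCtx σ
  | .hole L R, D => FCtx.hvOp L (FCtx.vhOp D R)
  | .node L a C R, D => .node L a (C.vvOp D) R

/-- `C ⊙ F` for a context `C` and a forest `F`: replace the hole of `C`
by the roots of `F` (⊙_VH). -/
def FCtx.plug {σ : Type} : FCtx σ → FForest σ → FForest σ
  | .hole L R, G => L.append (G.append R)
  | .node L a C R, G => L.append (.cons (.node a (C.plug G)) R)

/-- The empty forest ε. -/
def FForest.eps (σ : Type) : FForest σ := .nil

/-- The context □ consisting solely of the hole. -/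
def FCtx.box (σ : Type) : FCtx σ := .hole .nil .nil

/-- A stepwise nondeterministic tree automaton (NFTA)
`N = (Q, Σ, δ, Init, q0, qF)`.  A transition `(q1, q2, q3) ∈ δ` goes from
`q1` to `q3` when reading state `q2`. -/
structure NFTA (σ Q : Type) where
  delta : Set (Q × Q × Q)
  init : σ → Set Q
  q0 : Q
  qF : Q

mutual
/-- A run decoration of a tree: every node carries a transition
`(λ_pre, λ_self, λ_post)`. -/
inductive RTree (Q : Type) : Type
  | node : Q × Q × Q → RForest Q → RTree Q

/-- A run decoration of a forest. -/
inductive RForest (Q : Type) : Type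
  | nil : RForest Q
  | cons : RTree Q → RForest Q → RForest Q
end

/-- `λ_pre` of the root of a decorated tree. -/
def RTree.pre {Q : Type} : RTree Q → Q
  | .node (p, _, _) _ => p

/-- `λ_post` of the root of a decorated tree. -/
def RTree.post {Q : Type} : RTree Q → Q
  | .node (_, _, q) _ => q

/-- `λ_pre` of the first root of a decorated forest. -/
def RForest.firstPre {Q : Type} : RForest Q → Option Q
  | .nil => none
  | .cons t _ => some t.pre

/-- `λ_post` of the last root of a decorated forest. -/
def RForest.lastPost {Q : Type} : RForest Q → Option Q
  | .nil => none
  | .cons t .nil => some t.post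
  | .cons _ (.cons t F) => RForest.lastPost (.cons t F)

mutual
/-- `ValidT N ρ t`: the decoration `ρ` is a run of the automaton `N` on the
tree `t`: every node carries a transition of `δ`; `λ_self(v) ∈ Init(lab(v))`
for leaves `v`; `λ_self(v) = λ_post(last child of v)` for inner nodes `v`;
`λ_pre(first child of v) ∈ Init(lab(v))`; and `λ_pre(w) = λ_post(w')`
whenever `w'` is the left sibling of `w`. -/
def ValidT {σ Q : Type} (N : NFTA σ Q) : RTree Q → FTree σ → Prop
  | .node (p, s, q) ρs, .node a ts =>
    (p, s, q) ∈ N.delta ∧ ValidF N ρs ts ∧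
    (match ρs.firstPre, ρs.lastPost with
     | none, none => s ∈ N.init a
     | some fp, some lp => fp ∈ N.init a ∧ lp = s
     | _, _ => False)

/-- `ValidF N ρ F`: the decoration `ρ` is a run of `N` on the forest `F`
(the `λ_pre` of the leftmost root is unconstrained). -/
def ValidF {σ Q : Type} (N : NFTA σ Q) : RForest Q → FForest σ → Prop
  | .nil, .nil => True
  | .cons ρ ρs, .cons t ts =>
    ValidT N ρ t ∧ ValidF N ρs ts ∧
    (match ρs.firstPre with
     | none => True
     | some fp => fp = ρ.post)
  | _, _ => False
end

/-- A run decoration of a context: the hole carries the pair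
`(λ_pre(□), λ_post(□))` (its `λ_self` is the fresh state `q_□`, and all
transitions `(q, q_□, q')` are allowed). -/
inductive RCtx (Q : Type) : Type
  | hole : RForest Q → Q × Q → RForest Q → RCtx Q
  | node : RForest Q → Q × Q × Q → RCtx Q → RForest Q → RCtx Q

/-- `λ_pre` of the leftmost root of a decorated context. -/
def RCtx.preC {Q : Type} : RCtx Q → Q
  | .hole L (p, _) _ => L.firstPre.getD p
  | .node L (p, _, _) _ _ => L.firstPre.getD p

/-- `λ_post` of the rightmost root of a decorated context. -/
def RCtx.postC {Q : Type} : RCtx Q → Q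
  | .hole _ (_, q) R => R.lastPost.getD q
  | .node _ (_, _, q) _ R => R.lastPost.getD q

/-- `λ_pre(□)`. -/
def RCtx.holePre {Q : Type} : RCtx Q → Q
  | .hole _ (p, _) _ => p
  | .node _ _ C _ => C.holePre

/-- `λ_post(□)`. -/
def RCtx.holePost {Q : Type} : RCtx Q → Q
  | .hole _ (_, q) _ => q
  | .node _ _ C _ => C.holePost

/-- `ValidC N ρ C`: the decoration `ρ` is a run of `N` (extended by the
fresh state `q_□` with `Init(□) = {q_□}` and all transitions `(q, q_□, q')`)
on the context `C`, the hole being treated as an ordinary leaf. -/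
def ValidC {σ Q : Type} (N : NFTA σ Q) : RCtx Q → FCtx σ → Prop
  | .hole ρL (p, q) ρR, .hole L R =>
    ValidF N ρL L ∧ ValidF N ρR R ∧
    (match ρL.lastPost with
     | none => True
     | some lp => lp = p) ∧
    (match ρR.firstPre with
     | none => True
     | some fp => fp = q)
  | .node ρL (p, s, q) ρC ρR, .node L a C R =>
    (p, s, q) ∈ N.delta ∧ ValidF N ρL L ∧ ValidC N ρC C ∧ ValidF N ρR R ∧
    (match ρL.lastPost with
     | none => True
     | some lp => lp = p) ∧
    (match ρR.firstPre with
     | none => True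
     | some fp => fp = q) ∧
    ρC.preC ∈ N.init a ∧ ρC.postC = s
  | _, _ => False

/-! ### The transition algebra of `N` and the homomorphism `h` -/

/-- The identity relation `id_Q` (the horizontal neutral element). -/
def idH (Q : Type) : Set (Q × Q) := {x | ∃ q, x = (q, q)}

/-- The identity relation `id_{Q×Q}` (the vertical neutral element). -/
def idV (Q : Type) : Set ((Q × Q) × (Q × Q)) := {x | ∃ p, x = (p, p)}

/-- `⊕_HH` of the transition algebra. -/
def opHH {Q : Type} (F1 F2 : Set (Q × Q)) : Set (Q × Q) :=
  {x | ∃ q1 q2 q3, (q1, q2) ∈ F1 ∧ (q2, q3) ∈ F2 ∧ x = (q1, q3)}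

/-- `⊕_HV` of the transition algebra. -/
def opHV {Q : Type} (F : Set (Q × Q)) (C : Set ((Q × Q) × (Q × Q))) :
    Set ((Q × Q) × (Q × Q)) :=
  {x | ∃ q1 q2 q3 q4 q5,
    (q1, q2) ∈ F ∧ ((q2, q3), (q4, q5)) ∈ C ∧ x = ((q1, q3), (q4, q5))}

/-- `⊕_VH` of the transition algebra. -/
def opVH {Q : Type} (C : Set ((Q × Q) × (Q × Q))) (F : Set (Q × Q)) :
    Set ((Q × Q) × (Q × Q)) :=
  {x | ∃ q1 q2 q3 q4 q5,
    ((q1, q2), (q3, q4)) ∈ C ∧ (q2, q5) ∈ F ∧ x = ((q1, q5), (q3, q4))}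

/-- `⊙_VV` of the transition algebra. -/
def opVV {Q : Type} (C1 C2 : Set ((Q × Q) × (Q × Q))) :
    Set ((Q × Q) × (Q × Q)) :=
  {x | ∃ q1 q2 q3 q4 q5 q6,
    ((q1, q2), (q3, q4)) ∈ C1 ∧ ((q3, q4), (q5, q6)) ∈ C2 ∧
    x = ((q1, q2), (q5, q6))}

/-- `⊙_VH` of the transition algebra. -/
def opVHd {Q : Type} (C : Set ((Q × Q) × (Q × Q))) (F : Set (Q × Q)) :
    Set (Q × Q) :=
  {x | ∃ q1 q2 q3 q4,
    ((q1, q2), (q3, q4)) ∈ C ∧ (q3, q4) ∈ F ∧ x = (q1, q2)}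

/-- The atomic context `a_□`. -/
def atomCtx {σ : Type} (a : σ) : FCtx σ := .node .nil a (.hole .nil .nil) .nil

/-- The value `h(a_□)` of the homomorphism on the atomic context `a_□`:
the set of signatures of the runs of `N` on `a_□`. -/
def hAtom {σ Q : Type} (N : NFTA σ Q) (a : σ) : Set ((Q × Q) × (Q × Q)) :=
  {x | ∃ ρ : RCtx Q, ValidC N ρ (atomCtx a) ∧
    x = ((ρ.preC, ρ.postC), (ρ.holePre, ρ.holePost))}

mutual
/-- The homomorphism `h` on trees, determined by its values on the atomic
contexts and the algebra operations. -/
def hT {σ Q : Type} (N : NFTA σ Q) : FTree σ → Set (Q × Q)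
  | .node a ts => opVHd (hAtom N a) (hF N ts)

/-- The homomorphism `h` on forests. -/
def hF {σ Q : Type} (N : NFTA σ Q) : FForest σ → Set (Q × Q)
  | .nil => idH Q
  | .cons t ts => opHH (hT N t) (hF N ts)
end

/-- The homomorphism `h` on contexts. -/
def hC {σ Q : Type} (N : NFTA σ Q) : FCtx σ → Set ((Q × Q) × (Q × Q))
  | .hole L R => opHV (hF N L) (opVH (idV Q) (hF N R))
  | .node L a C R => opHV (hF N L) (opVH (opVV (hAtom N a) (hC N C)) (hF N R))

/-- Signature relation of a decorated forest. -/
def SgF {Q : Type} (ρ : RForest Q) (x y : Q) : Prop :=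
  (ρ.firstPre = some x ∧ ρ.lastPost = some y) ∨ (ρ = .nil ∧ x = y)

theorem lastPost_cons_some {Q : Type} : ∀ (F : RForest Q) (t : RTree Q),
    ∃ y, (RForest.cons t F).lastPost = some y
  | .nil, t => ⟨t.post, by simp [RForest.lastPost]⟩
  | .cons u F, t => by
    obtain ⟨y, hy⟩ := lastPost_cons_some F u
    exact ⟨y, by rw [RForest.lastPost]; exact hy⟩

theorem sgF_nil {Q : Type} (x y : Q) : SgF (.nil : RForest Q) x y ↔ x = y := by
  simp [SgF, RForest.firstPre]

theorem sgF_cons {Q : Type} (t : RTree Q) (F : RForest Q) (x y : Q) :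
    (SgF (.cons t F) x y ∧ (match F.firstPre with
     | none => True
     | some fp => fp = t.post)) ↔ x = t.pre ∧ SgF F t.post y := by
  cases F with
  | nil => simp [SgF, RForest.firstPre, RForest.lastPost, eq_comm]
  | cons u G =>
    simp only [SgF, RForest.firstPre, RForest.lastPost]
    simp
    grind

theorem inner_iff {Q : Type} (S : Set Q) (F : RForest Q) (s : Q) :
    (match F.firstPre, F.lastPost with
     | none, none => s ∈ S
     | some fp, some lp => fp ∈ S ∧ lp = s
     | _, _ => False) ↔ ∃ fp, fp ∈ S ∧ SgF F fp s := by
  cases F with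
  | nil => simp [SgF, RForest.firstPre, RForest.lastPost]
  | cons u G =>
    obtain ⟨y, hy⟩ := lastPost_cons_some G u
    simp [SgF, RForest.firstPre, hy]

theorem left_iff {Q : Type} (F : RForest Q) (x p : Q) :
    ((match F.lastPost with
     | none => True
     | some lp => lp = p) ∧ x = F.firstPre.getD p) ↔ SgF F x p := by
  cases F with
  | nil => simp [SgF, RForest.firstPre, RForest.lastPost]
  | cons u G =>
    obtain ⟨y, hy⟩ := lastPost_cons_some G u
    simp [SgF, RForest.firstPre, hy]
    grind

theorem right_iff {Q : Type} (F : RForest Q) (q y : Q) :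
    ((match F.firstPre with
     | none => True
     | some fp => fp = q) ∧ y = F.lastPost.getD q) ↔ SgF F q y := by
  cases F with
  | nil => simp [SgF, RForest.firstPre, RForest.lastPost, eq_comm]
  | cons u G =>
    obtain ⟨z, hz⟩ := lastPost_cons_some G u
    simp [SgF, RForest.firstPre, hz]
    grind

theorem mem_hAtom {σ Q : Type} (N : NFTA σ Q) (a : σ) (p q x y : Q) :
    ((p, q), (x, y)) ∈ hAtom N a ↔ (p, y, q) ∈ N.delta ∧ x ∈ N.init a := by
  constructor
  · rintro ⟨ρ, hv, he⟩
    rcases ρ with _ | ⟨L, ⟨p', s, q'⟩, C, R⟩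
    · simp [atomCtx, ValidC] at hv
    · rcases C with ⟨L', ⟨u, v⟩, R'⟩ | _
      · cases L <;> cases R <;> cases L' <;> cases R' <;>
          simp [atomCtx, ValidC, ValidF, RCtx.preC, RCtx.postC, RCtx.holePre, RCtx.holePost,
            RForest.firstPre, RForest.lastPost] at hv he
        grind
      · simp [atomCtx, ValidC] at hv
  · rintro ⟨h1, h2⟩
    refine ⟨.node .nil (p, y, q) (.hole .nil (x, y) .nil) .nil, ?_, ?_⟩ <;>
      simp [atomCtx, ValidC, ValidF, RCtx.preC, RCtx.postC, RCtx.holePre, RCtx.holePost,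
            RForest.firstPre, RForest.lastPost, h1, h2]

mutual
theorem mem_hT {σ Q : Type} (N : NFTA σ Q) : ∀ (t : FTree σ) (x y : Q),
    (x, y) ∈ hT N t ↔ ∃ ρ : RTree Q, ValidT N ρ t ∧ ρ.pre = x ∧ ρ.post = y
  | .node a ts, x, y => by
    have ih := mem_hF N ts
    rw [hT]
    constructor
    · rintro ⟨q1, q2, q3, q4, h1, h2, he⟩
      obtain ⟨rfl, rfl⟩ := Prod.mk.inj he
      rw [mem_hAtom] at h1
      obtain ⟨ρ, hv, hs⟩ := (ih _ _).1 h2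
      refine ⟨.node (x, q4, y) ρ, ?_, rfl, rfl⟩
      rw [ValidT]
      exact ⟨h1.1, hv, (inner_iff _ _ _).2 ⟨q3, h1.2, hs⟩⟩
    · rintro ⟨⟨⟨p, s, q⟩, ρ⟩, hv, rfl, rfl⟩
      rw [ValidT] at hv
      obtain ⟨h1, h2, h3⟩ := hv
      obtain ⟨fp, h4, h5⟩ := (inner_iff _ _ _).1 h3
      exact ⟨p, q, fp, s, (mem_hAtom ..).2 ⟨h1, h4⟩, (ih _ _).2 ⟨ρ, h2, h5⟩, rfl⟩
theorem mem_hF {σ Q : Type} (N : NFTA σ Q) : ∀ (F : FForest σ) (x y : Q),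
    (x, y) ∈ hF N F ↔ ∃ ρ : RForest Q, ValidF N ρ F ∧ SgF ρ x y
  | .nil, x, y => by
    rw [hF]
    constructor
    · rintro ⟨q, he⟩
      obtain ⟨rfl, rfl⟩ := Prod.mk.inj he
      exact ⟨.nil, by simp [ValidF], (sgF_nil _ _).2 rfl⟩
    · rintro ⟨ρ, hv, hs⟩
      cases ρ with
      | nil => exact ⟨x, by rw [(sgF_nil _ _).1 hs]⟩
      | cons => simp [ValidF] at hv
  | .cons t ts, x, y => by
    have iht := mem_hT N t
    have ih := mem_hF N ts
    rw [hF]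
    constructor
    · rintro ⟨q1, q2, q3, h1, h2, he⟩
      obtain ⟨rfl, rfl⟩ := Prod.mk.inj he
      obtain ⟨τ, hτ, rfl, rfl⟩ := (iht _ _).1 h1
      obtain ⟨ρ, hv, hs⟩ := (ih _ _).1 h2
      have h := (sgF_cons τ ρ _ _).2 ⟨rfl, hs⟩
      refine ⟨.cons τ ρ, ?_, h.1⟩
      rw [ValidF]
      exact ⟨hτ, hv, h.2⟩
    · rintro ⟨ρ, hv, hs⟩
      cases ρ with
      | nil => simp [ValidF] at hv
      | cons τ ρ =>
        rw [ValidF] at hv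
        obtain ⟨h1, h2, h3⟩ := hv
        obtain ⟨rfl, h4⟩ := (sgF_cons τ ρ _ _).1 ⟨hs, h3⟩
        exact ⟨_, _, _, (iht _ _).2 ⟨τ, h1, rfl, rfl⟩, (ih _ _).2 ⟨ρ, h2, h4⟩, rfl⟩
end

theorem mem_hC {σ Q : Type} (N : NFTA σ Q) : ∀ (C : FCtx σ) (x y u v : Q),
    ((x, y), (u, v)) ∈ hC N C ↔ ∃ ρ : RCtx Q, ValidC N ρ C ∧
      x = ρ.preC ∧ y = ρ.postC ∧ u = ρ.holePre ∧ v = ρ.holePost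
  | .hole L R, x, y, u, v => by
    rw [hC]
    constructor
    · rintro ⟨q1, q2, q3, q4, q5, h1, ⟨r1, r2, r3, r4, r5, ⟨p, h2⟩, h3, h4⟩, he⟩
      simp only [Prod.mk.injEq] at h2 h4 he
      obtain ⟨ρL, hvL, hsL⟩ := (mem_hF N _ _ _).1 h1
      obtain ⟨ρR, hvR, hsR⟩ := (mem_hF N _ _ _).1 h3
      have e1 : q2 = u := by grind
      have e2 : r2 = v := by grind
      have e3 : q1 = x := by grind
      have e4 : r5 = y := by grind
      subst e1 e2 e3 e4
      have hl := (left_iff _ _ _).2 hsL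
      have hr := (right_iff _ _ _).2 hsR
      refine ⟨.hole ρL (q2, r2) ρR, ?_, hl.2, hr.2, rfl, rfl⟩
      rw [ValidC]
      exact ⟨hvL, hvR, hl.1, hr.1⟩
    · rintro ⟨ρ, hv, rfl, rfl, rfl, rfl⟩
      rcases ρ with ⟨ρL, ⟨p, q⟩, ρR⟩ | _
      · rw [ValidC] at hv
        obtain ⟨h1, h2, h3, h4⟩ := hv
        exact ⟨_, p, _, p, q, (mem_hF N _ _ _).2 ⟨ρL, h1, (left_iff _ _ _).1 ⟨h3, rfl⟩⟩,
          ⟨p, q, p, q, _, ⟨(p, q), rfl⟩,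
            (mem_hF N _ _ _).2 ⟨ρR, h2, (right_iff _ _ _).1 ⟨h4, rfl⟩⟩, rfl⟩, rfl⟩
      · simp [ValidC] at hv
  | .node L a C R, x, y, u, v => by
    have ih := mem_hC N C
    rw [hC]
    constructor
    · rintro ⟨q1, q2, q3, q4, q5, h1, ⟨r1, r2, r3, r4, r5,
        ⟨s1, s2, s3, s4, s5, s6, ha, hc, h2⟩, h3, h4⟩, he⟩
      simp only [Prod.mk.injEq] at h2 h4 he
      obtain ⟨⟨rfl, rfl⟩, rfl, rfl⟩ := h2
      obtain ⟨⟨rfl, rfl⟩, rfl, rfl⟩ := h4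
      obtain ⟨⟨rfl, rfl⟩, rfl, rfl⟩ := he
      obtain ⟨ρL, hvL, hsL⟩ := (mem_hF N _ _ _).1 h1
      obtain ⟨ρR, hvR, hsR⟩ := (mem_hF N _ _ _).1 h3
      obtain ⟨ρC, hvC, rfl, rfl, rfl, rfl⟩ := (ih _ _ _ _).1 hc
      rw [mem_hAtom] at ha
      have hl := (left_iff _ _ _).2 hsL
      have hr := (right_iff _ _ _).2 hsR
      refine ⟨.node ρL (_, ρC.postC, _) ρC ρR, ?_, hl.2, hr.2, rfl, rfl⟩
      rw [ValidC]
      exact ⟨ha.1, hvL, hvC, hvR, hl.1, hr.1, ha.2, rfl⟩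
    · rintro ⟨ρ, hv, rfl, rfl, rfl, rfl⟩
      rcases ρ with _ | ⟨ρL, ⟨p, s, q⟩, ρC, ρR⟩
      · simp [ValidC] at hv
      · rw [ValidC] at hv
        obtain ⟨h0, h1, hC, h2, h3, h4, h5, rfl⟩ := hv
        exact ⟨_, p, _, _, _, (mem_hF N _ _ _).2 ⟨ρL, h1, (left_iff _ _ _).1 ⟨h3, rfl⟩⟩,
          ⟨p, q, _, _, _, ⟨p, q, _, _, _, _, (mem_hAtom ..).2 ⟨h0, h5⟩,
            (ih _ _ _ _).2 ⟨ρC, hC, rfl, rfl, rfl, rfl⟩, rfl⟩,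
            (mem_hF N _ _ _).2 ⟨ρR, h2, (right_iff _ _ _).1 ⟨h4, rfl⟩⟩, rfl⟩, rfl⟩

/-- Let `N` be a stepwise tree automaton with state set `Q`
over the alphabet `σ`, and let `h` be the forest-algebra homomorphism from
the free forest algebra over `σ` to the transition algebra of `N` determined
by `h(a_□) = {SIG(λ) | λ is a run of N on a_□}`.  Then for every forest or
context `D` over `σ`, `h(D) = {SIG(λ) | λ is a run of N on D}`.  (For a
nonempty forest the signature of a run is the pair
`(λ_pre(first root), λ_post(last root))`; the empty forest carries the
identity signatures.) -/
theorem homomorphism_computes_run_signatures {σ Q : Type} [Fintype Q]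
    (N : NFTA σ Q) :
    (∀ F : FForest σ, hF N F =
      {x | ∃ ρ : RForest Q, ValidF N ρ F ∧
        ((∃ q1 q2, ρ.firstPre = some q1 ∧ ρ.lastPost = some q2 ∧ x = (q1, q2)) ∨
         (ρ = .nil ∧ x.1 = x.2))}) ∧
    (∀ C : FCtx σ, hC N C =
      {x | ∃ ρ : RCtx Q, ValidC N ρ C ∧
        x = ((ρ.preC, ρ.postC), (ρ.holePre, ρ.holePost))}) := by
  refine ⟨fun F => ?_, fun C => ?_⟩
  · ext ⟨x, y⟩
    rw [mem_hF]
    simp only [Set.mem_setOf_eq]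
    refine exists_congr fun ρ => and_congr_right fun _ => ?_
    simp only [SgF, Prod.mk.injEq]
    constructor
    · rintro (⟨h1, h2⟩ | h)
      · exact Or.inl ⟨x, y, h1, h2, rfl, rfl⟩
      · exact Or.inr h
    · rintro (⟨q1, q2, h1, h2, rfl, rfl⟩ | h)
      · exact Or.inl ⟨h1, h2⟩
      · exact Or.inr h
  · ext ⟨⟨x, y⟩, ⟨u, v⟩⟩
    rw [mem_hC]
    simp only [Set.mem_setOf_eq, Prod.mk.injEq, and_assoc]
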